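/- Let G be a group, let n ≥ 1, let v > 0, let N ≥ 1, and let f_1, …, f_N be bounded G-invariant n-cocycles on G. Suppose there is a subgroup H ≤ G such that: (i) for every bounded (n−1)-cochain b on H, ‖f_1|_H + δb‖_∞ ≥ v; and (ii) for each i = 2, …, N there exists a bounded (n−1)-cochain b_i on H with f_i|_H = δb_i. Then for all real numbers a_1, …, a_N and every bounded (n−1)-cochain b on G, ‖a_1 f_1 + ⋯ + a_N f_N + δb‖_∞ ≥ |a_1|·v. -/

import Mathlib

/-- The ℓ¹-norm of a finitely supported real chain on tuples. -/
noncomputable def chainNorm {G : Type*} {m : ℕ} (Z : (Fin m → G) →₀ ℝ) : ℝ :=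
  Z.sum fun _ a => |a|

/-- The boundary of a chain: alternating sum of face maps (omitting entries). -/
noncomputable def chainBoundary {G : Type*} {m : ℕ} (Z : (Fin (m + 1) → G) →₀ ℝ) :
    (Fin m → G) →₀ ℝ :=
  Z.sum fun g a => ∑ i : Fin (m + 1), Finsupp.single (g ∘ i.succAbove) ((-1 : ℝ) ^ (i : ℕ) * a)

/-- Evaluation of a cochain on a chain. -/
noncomputable def chainEval {G : Type*} {m : ℕ} (f : (Fin m → G) → ℝ)
    (Z : (Fin m → G) →₀ ℝ) : ℝ :=
  Z.sum fun g a => a * f g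

/-- The homogeneous coboundary operator. -/
noncomputable def coboundary {G : Type*} {m : ℕ} (b : (Fin m → G) → ℝ) :
    (Fin (m + 1) → G) → ℝ :=
  fun g => ∑ i : Fin (m + 1), (-1 : ℝ) ^ (i : ℕ) * b (g ∘ i.succAbove)

/-- Pushforward of a chain along a map of groups, applied entrywise. -/
noncomputable def chainMap {G H : Type*} {m : ℕ} (φ : G → H) (Z : (Fin m → G) →₀ ℝ) :
    (Fin m → H) →₀ ℝ :=
  Finsupp.mapDomain (fun x => φ ∘ x) Z

/-- lower bound for seminorms of linear combinations of bounded
cocycles, via a subgroup where the first has maximal seminorm and the others vanish. -/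
theorem stmt_8
    {G : Type*} [Group G] (n : ℕ) (hn : 1 ≤ n) (v : ℝ) (hv : 0 < v)
    (N : ℕ) (hN : 1 ≤ N)
    (f : Fin N → (Fin (n + 1) → G) → ℝ)
    (hfinv : ∀ (i : Fin N) (x : G) (y : Fin (n + 1) → G), f i (fun j => x * y j) = f i y)
    (hfbdd : ∀ i : Fin N, ∃ C : ℝ, ∀ y, |f i y| ≤ C)
    (hfcoc : ∀ i : Fin N, coboundary (f i) = 0)
    (H : Subgroup G)
    (hi : ∀ b : (Fin n → H) → ℝ,
      (∀ (h : H) (x : Fin n → H), b (fun j => h * x j) = b x) →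
      (∃ C : ℝ, ∀ x, |b x| ≤ C) →
      ∀ C : ℝ,
        (∀ x : Fin (n + 1) → H,
          |f ⟨0, hN⟩ (fun j => (x j : G)) + coboundary b x| ≤ C) → v ≤ C)
    (hii : ∀ i : Fin N, i ≠ ⟨0, hN⟩ →
      ∃ bᵢ : (Fin n → H) → ℝ,
        (∀ (h : H) (x : Fin n → H), bᵢ (fun j => h * x j) = bᵢ x) ∧
        (∃ C : ℝ, ∀ x, |bᵢ x| ≤ C) ∧
        (∀ x : Fin (n + 1) → H, f i (fun j => (x j : G)) = coboundary bᵢ x)) :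
    ∀ a : Fin N → ℝ,
      ∀ b : (Fin n → G) → ℝ,
        (∀ (x : G) (y : Fin n → G), b (fun j => x * y j) = b y) →
        (∃ C : ℝ, ∀ y, |b y| ≤ C) →
        ∀ C : ℝ,
          (∀ y : Fin (n + 1) → G, |(∑ i, a i * f i y) + coboundary b y| ≤ C) →
          |a ⟨0, hN⟩| * v ≤ C := by
  intro a b hb hbb C hC
  obtain ⟨K, hK⟩ := hbb
  by_cases ha : a ⟨0, hN⟩ = 0
  · rw [ha, abs_zero, zero_mul]
    exact (abs_nonneg _).trans (hC (fun _ => 1))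
  have hex : ∀ i : Fin N, ∃ β : (Fin n → H) → ℝ,
      (∀ (h : H) (x : Fin n → H), β (fun j => h * x j) = β x) ∧
      (∃ C : ℝ, ∀ x, |β x| ≤ C) ∧
      (i ≠ ⟨0, hN⟩ → ∀ x : Fin (n + 1) → H, f i (fun j => (x j : G)) = coboundary β x) := by
    intro i
    by_cases h : i = ⟨0, hN⟩
    · exact ⟨fun _ => 0, fun _ _ => rfl, ⟨0, fun _ => by simp⟩, fun h' => absurd h h'⟩
    · obtain ⟨β, h1, h2, h3⟩ := hii i h
      exact ⟨β, h1, h2, fun _ => h3⟩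
  choose β hβinv hβbdd hβ using hex
  choose D hD using hβbdd
  have hpos : 0 < |a ⟨0, hN⟩| := abs_pos.mpr ha
  set S : Finset (Fin N) := Finset.univ.erase ⟨0, hN⟩ with hS
  have key := hi (fun x => (a ⟨0, hN⟩)⁻¹ * ((∑ i ∈ S, a i * β i x) + b (fun j => (x j : G))))
    (by
      intro h x
      have h1 : b (fun j => ((h * x j : H) : G)) = b (fun j => (x j : G)) := by
        simpa using hb (h : G) (fun j => (x j : G))
      simp only [h1, hβinv])
    ⟨|(a ⟨0, hN⟩)⁻¹| * ((∑ i ∈ S, |a i| * D i) + K), by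
      intro x
      rw [abs_mul]
      refine mul_le_mul_of_nonneg_left ?_ (abs_nonneg _)
      refine (abs_add_le _ _).trans (add_le_add ?_ (hK _))
      refine (Finset.abs_sum_le_sum_abs _ _).trans (Finset.sum_le_sum fun i _ => ?_)
      rw [abs_mul]
      exact mul_le_mul_of_nonneg_left (hD i x) (abs_nonneg _)⟩
    (C / |a ⟨0, hN⟩|)
    (by
      intro x
      rw [le_div_iff₀ hpos, ← abs_mul]
      refine le_of_eq_of_le (congrArg _ ?_) (hC (fun j => (x j : G)))
      have hcob : coboundary (fun x : Fin n → H => (a ⟨0, hN⟩)⁻¹ *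
            ((∑ i ∈ S, a i * β i x) + b (fun j => (x j : G)))) x
          = (a ⟨0, hN⟩)⁻¹ * ((∑ i ∈ S, a i * coboundary (β i) x)
            + coboundary b (fun j => (x j : G))) := by
        have e : (∑ i ∈ S, a i * coboundary (β i) x)
            = ∑ k : Fin (n + 1), (-1 : ℝ) ^ (k : ℕ) *
              ∑ i ∈ S, a i * β i (x ∘ k.succAbove) := by
          simp only [coboundary, Finset.mul_sum]
          rw [Finset.sum_comm]
          refine Finset.sum_congr rfl fun k _ => Finset.sum_congr rfl fun i _ => ?_
          ring
        rw [e]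
        simp only [coboundary]
        rw [← Finset.sum_add_distrib, Finset.mul_sum]
        refine Finset.sum_congr rfl fun k _ => ?_
        have hc : (fun j => (x j : G)) ∘ k.succAbove
            = fun j => (((x ∘ k.succAbove) j : H) : G) := rfl
        rw [hc]
        ring
      rw [hcob, ← Finset.add_sum_erase Finset.univ _ (Finset.mem_univ (⟨0, hN⟩ : Fin N)), ← hS]
      have hs : (∑ i ∈ S, a i * f i (fun j => (x j : G)))
          = ∑ i ∈ S, a i * coboundary (β i) x :=
        Finset.sum_congr rfl fun i hiS => by rw [hβ i (Finset.ne_of_mem_erase hiS)]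
      rw [hs]
      field_simp
      ring)
  rw [le_div_iff₀ hpos] at key
  linarith
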